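/- arXiv:cs/0210027 — 4 statements merged into one kernel-verified Lean document; each statement's English description precedes it below -/
import Mathlib

section
/- Let P be a propositional normal logic program. A two-valued model M ⊆ B_P of P is a stable model of P if and only if there exists a total level mapping l : B_P → α such that for every A ∈ M there exists a clause A ← A₁,…,Aₙ,¬B₁,…,¬Bₘ in P with Aᵢ ∈ M, Bⱼ ∉ M, and l(A) > l(Aᵢ) for all i = 1,…,n and j = 1,…,m. -/
namespace LP

/-- A literal over a set of propositional atoms: an atom or a negated atom. -/
inductive Lit (atom : Type) where
  | pos : atom → Lit atom
  | neg : atom → Lit atom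

/-- The underlying atom of a literal. -/
def Lit.atomOf {atom : Type} : Lit atom → atom
  | .pos a => a
  | .neg a => a

/-- A clause `head ← pos₁,…,posₙ, ¬neg₁,…,¬negₘ`. -/
structure Clause (atom : Type) where
  head : atom
  pos : Finset atom
  neg : Finset atom

variable {atom : Type}

/-- A (propositional) normal logic program: a set of clauses. -/
abbrev Program (atom : Type) := Set (Clause atom)

/-- Partial interpretations: sets of literals. -/
abbrev Interp (atom : Type) := Set (Lit atom)

def Consistent (I : Interp atom) : Prop := ∀ a : atom, ¬ (Lit.pos a ∈ I ∧ Lit.neg a ∈ I)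

def Total (I : Interp atom) : Prop := ∀ a : atom, Lit.pos a ∈ I ∨ Lit.neg a ∈ I

/-- An atom is defined (true or false, i.e. not undefined) in `I`. -/
def Defined (I : Interp atom) (A : atom) : Prop := Lit.pos A ∈ I ∨ Lit.neg A ∈ I

/-- Every body literal of the clause is true in `I`. -/
def BodyTrue (I : Interp atom) (C : Clause atom) : Prop :=
  (∀ a ∈ C.pos, Lit.pos a ∈ I) ∧ (∀ b ∈ C.neg, Lit.neg b ∈ I)

/-- Some body literal of the clause is false in `I`. -/
def BodyFalse (I : Interp atom) (C : Clause atom) : Prop :=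
  (∃ a ∈ C.pos, Lit.neg a ∈ I) ∨ (∃ b ∈ C.neg, Lit.pos b ∈ I)

/-- Three-valued model. -/
def Model3 (P : Program atom) (I : Interp atom) : Prop :=
  Consistent I ∧ ∀ C ∈ P,
    (BodyTrue I C → Lit.pos C.head ∈ I) ∧ (¬ BodyFalse I C → Lit.neg C.head ∉ I)

/-- Two-valued model. -/
def Model2 (P : Program atom) (M : Set atom) : Prop :=
  ∀ C ∈ P, (∀ a ∈ C.pos, a ∈ M) → (∀ b ∈ C.neg, b ∉ M) → C.head ∈ M

/-- A program is definite if no clause has negative body literals. -/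
def Definite (P : Program atom) : Prop := ∀ C ∈ P, C.neg = ∅

/-- The one-step operator `T_P⁺` for definite programs. -/
def Tplus (P : Program atom) (M : Set atom) : Set atom :=
  {A | ∃ C ∈ P, C.head = A ∧ C.neg = ∅ ∧ ∀ a ∈ C.pos, a ∈ M}

def TplusIter (P : Program atom) : ℕ → Set atom
  | 0 => ∅
  | n + 1 => Tplus P (TplusIter P n)

/-- `T_P⁺ ↑ ω`, the least two-valued model of a definite program. -/
def TplusOmega (P : Program atom) : Set atom := ⋃ n, TplusIter P n

/-- The Gelfond–Lifschitz reduct `P/M`. -/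
def GLreduct (P : Program atom) (M : Set atom) : Program atom :=
  {C' | ∃ C ∈ P, (∀ b ∈ C.neg, b ∉ M) ∧ C' = ⟨C.head, C.pos, ∅⟩}

/-- The Gelfond–Lifschitz operator. -/
def GLop (P : Program atom) (M : Set atom) : Set atom := TplusOmega (GLreduct P M)

/-- Stable model. -/
def Stable (P : Program atom) (M : Set atom) : Prop := GLop P M = M

def posLits (S : Set atom) : Interp atom := Lit.pos '' S
def negLits (S : Set atom) : Interp atom := Lit.neg '' S

/-- Three-valued immediate-consequence operator `T_P`. -/
def TP (P : Program atom) (I : Interp atom) : Set atom :=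
  {A | ∃ C ∈ P, C.head = A ∧ BodyTrue I C}

/-- `F_P`: atoms all of whose clauses have false bodies. -/
def FP (P : Program atom) (I : Interp atom) : Set atom :=
  {A | ∀ C ∈ P, C.head = A → BodyFalse I C}

/-- Fitting's operator `Φ_P`. -/
def Phi (P : Program atom) (I : Interp atom) : Interp atom :=
  posLits (TP P I) ∪ negLits (FP P I)

/-- Knaster–Tarski least (pre-)fixed point of an operator on sets. -/
def lfpSet {L : Type*} (F : Set L → Set L) : Set L := ⋂₀ {I | F I ⊆ I}

/-- Knaster–Tarski greatest (post-)fixed point of an operator on sets. -/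
def gfpSet {L : Type*} (F : Set L → Set L) : Set L := ⋃₀ {I | I ⊆ F I}

/-- The Fitting (Kripke–Kleene) model: least fixed point of `Φ_P`. -/
def FittingModel (P : Program atom) : Interp atom := lfpSet (Phi P)

/-- Transfinite iteration `F ↑ α` of an operator starting from `∅`. -/
noncomputable def iterOrd {L : Type*} (F : Set L → Set L) (α : Ordinal.{0}) : Set L :=
  Ordinal.limitRecOn α ∅ (fun _ ih => F ih) (fun o _ ih => ⋃ β, ⋃ h : β < o, ih β h)

/-- `U` is an unfounded set of `P` with respect to `I`. -/
def Unfounded (P : Program atom) (I : Interp atom) (U : Set atom) : Prop :=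
  ∀ A ∈ U, ∀ C ∈ P, C.head = A → BodyFalse I C ∨ ∃ a ∈ C.pos, a ∈ U

/-- The greatest unfounded set of `P` with respect to `I`. -/
def UP (P : Program atom) (I : Interp atom) : Set atom := ⋃₀ {U | Unfounded P I U}

/-- The van Gelder–Ross–Schlipf operator `W_P`. -/
def WP (P : Program atom) (I : Interp atom) : Interp atom :=
  posLits (TP P I) ∪ negLits (UP P I)

/-- The well-founded model: least fixed point of `W_P`. -/
def WFModel (P : Program atom) : Interp atom := lfpSet (WP P)

/-- `P` satisfies (F) with respect to `I` and the level mapping `l`. -/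
def CondF (P : Program atom) (I : Interp atom) (l : atom → Ordinal.{0}) : Prop :=
  ∀ A : atom, Defined I A →
    (Lit.pos A ∈ I ∧ ∃ C ∈ P, C.head = A ∧
        (∀ a ∈ C.pos, Lit.pos a ∈ I ∧ l a < l A) ∧
        (∀ b ∈ C.neg, Lit.neg b ∈ I ∧ l b < l A)) ∨
    (Lit.neg A ∈ I ∧ ∀ C ∈ P, C.head = A →
        (∃ a ∈ C.pos, Lit.neg a ∈ I ∧ l a < l A) ∨
        (∃ b ∈ C.neg, Lit.pos b ∈ I ∧ l b < l A))

/-- `P` satisfies (WF) with respect to `I` and the level mapping `l`. -/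
def CondWF (P : Program atom) (I : Interp atom) (l : atom → Ordinal.{0}) : Prop :=
  ∀ A : atom, Defined I A →
    (Lit.pos A ∈ I ∧ ∃ C ∈ P, C.head = A ∧
        (∀ a ∈ C.pos, Lit.pos a ∈ I ∧ l a < l A) ∧
        (∀ b ∈ C.neg, Lit.neg b ∈ I ∧ l b < l A)) ∨
    (Lit.neg A ∈ I ∧ ∀ C ∈ P, C.head = A →
        (∃ a ∈ C.pos, Lit.neg a ∈ I ∧ l a ≤ l A) ∨
        (∃ b ∈ C.neg, Lit.pos b ∈ I ∧ l b < l A))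

/-- `P` satisfies (WS) with respect to `I` and the level mapping `l`. -/
def CondWS (P : Program atom) (I : Interp atom) (l : atom → Ordinal.{0}) : Prop :=
  ∀ A : atom, Defined I A →
    (Lit.pos A ∈ I ∧ ∃ C ∈ P, C.head = A ∧
        (∀ a ∈ C.pos, Lit.pos a ∈ I ∧ l a < l A) ∧
        (∀ b ∈ C.neg, Lit.neg b ∈ I ∧ l b < l A)) ∨
    (Lit.neg A ∈ I ∧ ∀ C ∈ P, C.head = A →
        (∃ a ∈ C.pos, Lit.neg a ∈ I ∧ l a < l A) ∨
        ((∀ a ∈ C.pos, l a ≤ l A) ∧ (∀ b ∈ C.neg, l b < l A) ∧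
            ∃ a ∈ C.pos, Lit.neg a ∈ I) ∨
        (∃ b ∈ C.neg, Lit.pos b ∈ I ∧ l b < l A))

/-- `A` refers to `B`. -/
def RefersTo (P : Program atom) (A B : atom) : Prop :=
  ∃ C ∈ P, C.head = A ∧ (B ∈ C.pos ∨ B ∈ C.neg)

/-- `A` refers negatively to `B`. -/
def RefersNeg (P : Program atom) (A B : atom) : Prop :=
  ∃ C ∈ P, C.head = A ∧ B ∈ C.neg

/-- `DepOn P A B`: `A` depends on `B`, i.e. `B ≤ A`. -/
def DepOn (P : Program atom) : atom → atom → Prop := Relation.TransGen (RefersTo P)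

/-- `DepNeg P B A`: `B < A`, i.e. `A` depends negatively on `B`. -/
def DepNeg (P : Program atom) (B A : atom) : Prop :=
  ∃ C D, RefersNeg P C D ∧ (DepOn P A C ∨ C = A) ∧ (DepOn P D B ∨ B = D)

/-- `A ~ B`. -/
def Sim (P : Program atom) (A B : atom) : Prop :=
  A = B ∨ (DepNeg P A B ∧ DepNeg P B A)

/-- The components of `P`: equivalence classes of `~`. -/
def IsComponent (P : Program atom) (C : Set atom) : Prop :=
  ∃ A : atom, C = {B | Sim P A B}

/-- A trivial component: a singleton `{A}` with `A ≮ A`. -/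
def TrivialComponent (P : Program atom) (C : Set atom) : Prop :=
  ∃ A : atom, C = {A} ∧ ¬ DepNeg P A A

/-- The ordering `≺` on components. -/
def CompLt (P : Program atom) (C₁ C₂ : Set atom) : Prop :=
  C₁ ≠ C₂ ∧ ∀ A₁ ∈ C₁, ∃ A₂ ∈ C₂, DepNeg P A₁ A₂

def MinimalComponent (P : Program atom) (C : Set atom) : Prop :=
  IsComponent P C ∧ ¬ ∃ C₂, IsComponent P C₂ ∧ CompLt P C₂ C

/-- The bottom stratum `S(P)`: union of all minimal components. -/
def bottomStratum (P : Program atom) : Set atom :=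
  {A | ∃ C, MinimalComponent P C ∧ A ∈ C}

/-- The bottom layer `L(P)`: clauses with head in the bottom stratum. -/
def bottomLayer (P : Program atom) : Program atom :=
  {C ∈ P | C.head ∈ bottomStratum P}

/-- Delete from the body of `C` all literals true in `I`. -/
noncomputable def reduceClause (I : Interp atom) (C : Clause atom) : Clause atom :=
  letI : ∀ p : Prop, Decidable p := fun p => Classical.propDecidable p
  ⟨C.head, C.pos.filter (fun a => Lit.pos a ∉ I), C.neg.filter (fun b => Lit.neg b ∉ I)⟩

/-- Steps (1) and (2) of the reduct of `P` with respect to `I`. -/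
noncomputable def step12 (P : Program atom) (I : Interp atom) : Program atom :=
  {C' | ∃ C ∈ P, Lit.pos C.head ∉ I ∧ ¬ BodyFalse I C ∧ C' = reduceClause I C}

def IsUnitClause (C : Clause atom) : Prop := C.pos = ∅ ∧ C.neg = ∅

/-- The reduct `P/I` of Przymusinska–Przymusinski (steps (1)–(3)). -/
noncomputable def reduct (P : Program atom) (I : Interp atom) : Program atom :=
  {C ∈ step12 P I | IsUnitClause C ∨ ¬ ∃ C' ∈ step12 P I, C'.head = C.head ∧ IsUnitClause C'}

/-- The atoms occurring in `P`. -/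
def atomsOf (P : Program atom) : Set atom :=
  {A | ∃ C ∈ P, A = C.head ∨ A ∈ C.pos ∨ A ∈ C.neg}

/-- `R`: atoms undefined in `N` which are eliminated from `P` by reducing w.r.t. `N`. -/
noncomputable def Ratoms (P : Program atom) (N : Interp atom) : Set atom :=
  {A | A ∈ atomsOf P ∧ A ∉ atomsOf (reduct P N) ∧ ¬ Defined N A}

/-- The definite (partial) model of a definite program `Q`. -/
def defPartialModel (Q : Program atom) : Interp atom :=
  posLits (TplusOmega Q) ∪ negLits (atomsOf Q \ TplusOmega Q)

/-- The stopping condition of the weakly perfect model construction at `N`. -/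
noncomputable def stopCond (P : Program atom) (N : Interp atom) : Prop :=
  reduct P N = ∅ ∨ bottomStratum (reduct P N) = ∅ ∨
    ∃ C ∈ bottomLayer (reduct P N), C.neg ≠ ∅

/-- `M_α` computed from `N_α` (empty if the construction has stopped). -/
noncomputable def Mstep (P : Program atom) (N : Interp atom) : Interp atom :=
  letI : ∀ p : Prop, Decidable p := fun p => Classical.propDecidable p
  if stopCond P N then ∅
  else defPartialModel (bottomLayer (reduct P N)) ∪ negLits (Ratoms P N)

/-- `N_α = ⋃_{0<δ<α} M_δ` of the weakly perfect model construction. -/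
noncomputable def Nseq (P : Program atom) : Ordinal.{0} → Interp atom :=
  Ordinal.lt_wf.fix (C := fun _ => Interp atom)
    (fun α ih => ⋃ β : Ordinal.{0}, ⋃ h : β < α, Mstep P (ih β h))

/-- The stage at which the weakly perfect model construction stops. -/
noncomputable def wpStop (P : Program atom) : Ordinal.{0} :=
  sInf {α | stopCond P (Nseq P α)}

/-- The weakly perfect model `M_P = N_α ∪ ¬R_α` at the stopping stage `α`. -/
noncomputable def weaklyPerfectModel (P : Program atom) : Interp atom :=
  Nseq P (wpStop P) ∪ negLits (Ratoms P (Nseq P (wpStop P)))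

/-- Clause subsumption `C₁ ≼ C₂`. -/
def ClauseSub (C₁ C₂ : Clause atom) : Prop :=
  C₁.head = C₂.head ∧ C₁.pos ⊆ C₂.pos ∧ C₁.neg ⊆ C₂.neg

/-- `P'` subsumes `Q` model-consistently with respect to `I`: `P' ≼_I Q`. -/
def SubsumesMC (P' Q : Program atom) (I : Interp atom) : Prop :=
  (∀ C₁ ∈ P', ∃ C₂ ∈ Q, ClauseSub C₁ C₂ ∧
      (∀ a ∈ C₂.pos, a ∉ C₁.pos → Lit.pos a ∈ I) ∧
      (∀ b ∈ C₂.neg, b ∉ C₁.neg → Lit.neg b ∈ I)) ∧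
  (∀ C₂ ∈ Q, BodyTrue I C₂ → Lit.pos C₂.head ∉ I → ∃ C₁ ∈ P', ClauseSub C₁ C₂)


theorem TplusIter_mono_succ (Q : Program atom) (n : ℕ) :
    TplusIter Q n ⊆ TplusIter Q (n + 1) := by
  induction n with
  | zero => exact Set.empty_subset _
  | succ n ih =>
    rintro A ⟨C, hC, hh, hn, hp⟩
    exact ⟨C, hC, hh, hn, fun a ha => ih (hp a ha)⟩

theorem TplusIter_mono (Q : Program atom) : Monotone (TplusIter Q) :=
  monotone_nat_of_le_succ (TplusIter_mono_succ Q)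

theorem GLop_subset_of_model (P : Program atom) (M : Set atom) (hM : Model2 P M) :
    GLop P M ⊆ M := by
  apply Set.iUnion_subset
  intro n
  induction n with
  | zero => exact Set.empty_subset _
  | succ n ih =>
    rintro A ⟨C', ⟨C, hC, hneg, rfl⟩, rfl, -, hp⟩
    exact hM C hC (fun a ha => ih (hp a ha)) hneg

theorem Tplus_omega_closed (Q : Program atom) (C : Clause atom) (hC : C ∈ Q)
    (hn : C.neg = ∅) (hp : ∀ a ∈ C.pos, a ∈ TplusOmega Q) : C.head ∈ TplusOmega Q := by
  have h : ∀ a, ∃ n, a ∈ C.pos → a ∈ TplusIter Q n := by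
    intro a
    by_cases ha : a ∈ C.pos
    · obtain ⟨n, hn⟩ := Set.mem_iUnion.1 (hp a ha)
      exact ⟨n, fun _ => hn⟩
    · exact ⟨0, fun h => absurd h ha⟩
  choose f hf using h
  refine Set.mem_iUnion.2 ⟨C.pos.sup f + 1, C, hC, rfl, hn, fun a ha => ?_⟩
  exact TplusIter_mono Q (Finset.le_sup ha) (hf a ha)

/-- Fages: a two-valued model is stable iff it is supported by a
total level mapping. -/
theorem stable_model_char {atom : Type} [Countable atom]
    (P : Program atom) (M : Set atom) (hM : Model2 P M) :
    Stable P M ↔ ∃ l : atom → Ordinal.{0}, ∀ A ∈ M, ∃ C ∈ P, C.head = A ∧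
      (∀ a ∈ C.pos, a ∈ M ∧ l a < l A) ∧ (∀ b ∈ C.neg, b ∉ M) := by
  constructor
  · intro hS
    refine ⟨fun A => ((sInf {n | A ∈ TplusIter (GLreduct P M) n} : ℕ) : Ordinal.{0}), ?_⟩
    intro A hA
    rw [← hS] at hA
    have hne : {n | A ∈ TplusIter (GLreduct P M) n}.Nonempty := Set.mem_iUnion.1 hA
    have hmem : A ∈ TplusIter (GLreduct P M) _ := Nat.sInf_mem hne
    beta_reduce
    generalize sInf {n | A ∈ TplusIter (GLreduct P M) n} = k at hmem ⊢
    cases k with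
    | zero => exact absurd hmem (Set.notMem_empty A)
    | succ k =>
      obtain ⟨C', ⟨C, hC, hneg, rfl⟩, hh, -, hp⟩ := hmem
      refine ⟨C, hC, hh, fun a ha => ⟨?_, ?_⟩, hneg⟩
      · rw [← hS]
        exact Set.mem_iUnion.2 ⟨k, hp a ha⟩
      · have hle : sInf {n | a ∈ TplusIter (GLreduct P M) n} ≤ k := Nat.sInf_le (hp a ha)
        exact_mod_cast Nat.lt_succ_of_le hle
  · rintro ⟨l, hl⟩
    refine Set.Subset.antisymm (GLop_subset_of_model P M hM) ?_
    have key : ∀ o : Ordinal.{0}, ∀ A ∈ M, l A = o → A ∈ GLop P M := by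
      intro o
      induction o using WellFoundedLT.induction with
      | ind o ih =>
        rintro A hA rfl
        obtain ⟨C, hC, rfl, hp, hneg⟩ := hl A hA
        exact Tplus_omega_closed (GLreduct P M) ⟨C.head, C.pos, ∅⟩ ⟨C, hC, hneg, rfl⟩ rfl
          (fun a ha => ih (l a) (hp a ha).2 a (hp a ha).1 rfl)
    exact fun A hA => key (l A) A hA rfl

end LP
end

section
/- Let P be a propositional normal logic program, I a model of P, and l an I-partial level mapping such that P satisfies (F) with respect to I and l. Then for every A ∈ dom(l) with l(A) = α: if A ∈ I then A ∈ Φ_P↑(α+1), and if ¬A ∈ I then ¬A ∈ Φ_P↑(α+1). -/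
namespace LP

variable {atom : Type}

theorem iterOrd_succ' {L : Type*} (F : Set L → Set L) (α : Ordinal.{0}) :
    iterOrd F (α + 1) = F (iterOrd F α) := by
  unfold iterOrd
  rw [Ordinal.limitRecOn_add_one]

theorem iterOrd_limit' {L : Type*} (F : Set L → Set L) {α : Ordinal.{0}}
    (h : Order.IsSuccLimit α) :
    iterOrd F α = ⋃ β, ⋃ _ : β < α, iterOrd F β := by
  unfold iterOrd
  rw [Ordinal.limitRecOn_limit _ _ _ _ h]

theorem iterOrd_zero' {L : Type*} (F : Set L → Set L) : iterOrd F 0 = ∅ := by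
  unfold iterOrd
  rw [Ordinal.limitRecOn_zero]

theorem iterOrd_step {L : Type*} (F : Set L → Set L) (hF : Monotone F) (β : Ordinal.{0}) :
    ∀ γ < β, F (iterOrd F γ) ⊆ iterOrd F β := by
  induction β using Ordinal.limitRecOn with
  | zero => intro γ h; exact absurd h (not_lt_of_ge (zero_le (a := γ)))
  | add_one β ih =>
    intro γ h
    have hγ : γ ≤ β := Order.lt_succ_iff.mp h
    clear h
    have key : ∀ γ ≤ β, iterOrd F γ ⊆ iterOrd F β := by
      intro γ
      induction γ using Ordinal.limitRecOn with
      | zero => intro _; rw [iterOrd_zero']; exact Set.empty_subset _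
      | add_one δ _ =>
        intro h
        have h2 := ih δ (Order.succ_le_iff.mp h)
        rw [← iterOrd_succ' F δ] at h2
        exact h2
      | limit γ hl ih2 =>
        intro h
        rw [iterOrd_limit' F hl]
        exact Set.iUnion₂_subset fun δ hδ => ih2 δ hδ (hδ.le.trans h)
    have h2 := hF (key γ hγ)
    rw [← iterOrd_succ' F β] at h2
    exact h2
  | limit β hl _ =>
    intro γ h
    rw [← iterOrd_succ' F γ, iterOrd_limit' F hl]
    exact Set.subset_iUnion₂_of_subset (γ + 1) (hl.succ_lt h) subset_rfl

theorem Phi_mono {atom : Type} (P : Program atom) : Monotone (Phi P) := by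
  intro I J h
  apply Set.union_subset_union
  · apply Set.image_mono
    rintro A ⟨C, hC, e, h1, h2⟩
    exact ⟨C, hC, e, fun a ha => h (h1 a ha), fun a ha => h (h2 a ha)⟩
  · apply Set.image_mono
    intro A hA C hC e
    rcases hA C hC e with ⟨a, ha, h1⟩ | ⟨a, ha, h1⟩
    · exact Or.inl ⟨a, ha, h h1⟩
    · exact Or.inr ⟨a, ha, h h1⟩

/-- if `P` satisfies (F) w.r.t. a model `I` and level mapping `l`, then
every literal of `I` appears in the iterate `Φ_P↑(l(A)+1)`. -/
theorem condF_implies_in_iterate {atom : Type} [Countable atom] (P : Program atom)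
    (I : Interp atom) (l : atom → Ordinal.{0}) (hI : Model3 P I) (hF : CondF P I l) :
    ∀ A : atom,
      (Lit.pos A ∈ I → Lit.pos A ∈ iterOrd (Phi P) (l A + 1)) ∧
      (Lit.neg A ∈ I → Lit.neg A ∈ iterOrd (Phi P) (l A + 1)) := by
  intro A
  induction hα : l A using WellFoundedLT.induction generalizing A with
  | ind α ih =>
  subst hα
  have hp : ∀ B, l B < l A → Lit.pos B ∈ I → Lit.pos B ∈ iterOrd (Phi P) (l A) := by
    intro B hB h
    have h1 := (ih _ hB B rfl).1 h
    rw [iterOrd_succ'] at h1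
    exact iterOrd_step _ (Phi_mono P) _ _ hB h1
  have hn : ∀ B, l B < l A → Lit.neg B ∈ I → Lit.neg B ∈ iterOrd (Phi P) (l A) := by
    intro B hB h
    have h1 := (ih _ hB B rfl).2 h
    rw [iterOrd_succ'] at h1
    exact iterOrd_step _ (Phi_mono P) _ _ hB h1
  rw [iterOrd_succ']
  constructor
  · intro hA
    rcases hF A (Or.inl hA) with ⟨_, C, hC, e, h1, h2⟩ | ⟨h, _⟩
    · exact Or.inl ⟨A, ⟨C, hC, e, fun a ha => hp a (h1 a ha).2 (h1 a ha).1,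
        fun a ha => hn a (h2 a ha).2 (h2 a ha).1⟩, rfl⟩
    · exact absurd ⟨hA, h⟩ (hI.1 A)
  · intro hA
    rcases hF A (Or.inr hA) with ⟨h, _⟩ | ⟨_, h⟩
    · exact absurd ⟨h, hA⟩ (hI.1 A)
    · refine Or.inr ⟨A, fun C hC e => ?_, rfl⟩
      rcases h C hC e with ⟨a, ha, h1, h2⟩ | ⟨a, ha, h1, h2⟩
      · exact Or.inl ⟨a, ha, hn a h2 h1⟩
      · exact Or.inr ⟨a, ha, hp a h2 h1⟩

end LP
end

section
/- A propositional normal logic program P has a total Fitting model if and only if there exist a total model I of P and a total level mapping l for P such that P satisfies (F) with respect to I and l. -/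
namespace LP

variable {atom : Type}

/-- Cumulative stages of the Fitting operator. -/
noncomputable def stg {atom : Type} (P : Program atom) (α : Ordinal.{0}) : Interp atom :=
  {L | ∃ β, ∃ _h : β < α, L ∈ Phi P (stg P β)}
termination_by α

theorem mem_stg {atom : Type} {P : Program atom} {α : Ordinal.{0}} {L : Lit atom} :
    L ∈ stg P α ↔ ∃ β < α, L ∈ Phi P (stg P β) := by
  rw [stg]
  simp

theorem pos_mem_Phi {atom : Type} {P : Program atom} {I : Interp atom} {a : atom} :
    Lit.pos a ∈ Phi P I ↔ ∃ C ∈ P, C.head = a ∧ BodyTrue I C := by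
  simp [Phi, posLits, negLits, TP]

theorem neg_mem_Phi {atom : Type} {P : Program atom} {I : Interp atom} {a : atom} :
    Lit.neg a ∈ Phi P I ↔ ∀ C ∈ P, C.head = a → BodyFalse I C := by
  simp [Phi, posLits, negLits, FP]

theorem Phi_mono' {atom : Type} {P : Program atom} {I J : Interp atom} (h : I ⊆ J) :
    Phi P I ⊆ Phi P J := by
  intro L hL
  cases L with
  | pos a =>
    rw [pos_mem_Phi] at hL ⊢
    obtain ⟨C, hC, hh, h1, h2⟩ := hL
    exact ⟨C, hC, hh, fun a ha => h (h1 a ha), fun b hb => h (h2 b hb)⟩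
  | neg a =>
    rw [neg_mem_Phi] at hL ⊢
    intro C hC hh
    rcases hL C hC hh with ⟨x, hx, hx'⟩ | ⟨x, hx, hx'⟩
    · exact Or.inl ⟨x, hx, h hx'⟩
    · exact Or.inr ⟨x, hx, h hx'⟩

theorem Phi_consistent {atom : Type} {P : Program atom} {I : Interp atom} (h : Consistent I) :
    Consistent (Phi P I) := by
  rintro a ⟨h1, h2⟩
  rw [pos_mem_Phi] at h1
  rw [neg_mem_Phi] at h2
  obtain ⟨C, hC, hh, h1, h1'⟩ := h1
  rcases h2 C hC hh with ⟨x, hx, hx'⟩ | ⟨x, hx, hx'⟩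
  · exact h x ⟨h1 x hx, hx'⟩
  · exact h x ⟨hx', h1' x hx⟩

theorem stg_mono {atom : Type} {P : Program atom} {α β : Ordinal.{0}} (h : α ≤ β) :
    stg P α ⊆ stg P β := by
  intro L hL
  rw [mem_stg] at hL ⊢
  obtain ⟨γ, hγ, hL⟩ := hL
  exact ⟨γ, hγ.trans_le h, hL⟩

theorem stg_consistent {atom : Type} (P : Program atom) (α : Ordinal.{0}) :
    Consistent (stg P α) := by
  induction α using Ordinal.induction with
  | h α ih =>
    rintro a ⟨h1, h2⟩
    rw [mem_stg] at h1 h2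
    obtain ⟨β, hβ, h1⟩ := h1
    obtain ⟨γ, hγ, h2⟩ := h2
    exact Phi_consistent (ih (max β γ) (max_lt hβ hγ)) a
      ⟨Phi_mono' (stg_mono (le_max_left _ _)) h1, Phi_mono' (stg_mono (le_max_right _ _)) h2⟩

theorem stg_closed {atom : Type} (P : Program atom) :
    ∃ γ : Ordinal.{0}, ∀ α, stg P α ⊆ stg P γ := by
  classical
  let r : Lit atom → Ordinal.{0} := fun L =>
    if h : ∃ α, L ∈ stg P α then h.choose else 0
  refine ⟨⨆ L, r L, fun α L hL => ?_⟩
  have h : ∃ α, L ∈ stg P α := ⟨α, hL⟩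
  have hr : L ∈ stg P (r L) := by
    simp only [r, dif_pos h]
    exact h.choose_spec
  exact stg_mono (Ordinal.le_iSup r L) hr

/-- `P` has a total Fitting model iff there is a total model `I` and a
total level mapping `l` such that `P` satisfies (F) w.r.t. `I` and `l`. -/
theorem total_fitting_char {atom : Type} [Countable atom] (P : Program atom) :
    Total (FittingModel P) ↔
    ∃ (I : Interp atom) (l : atom → Ordinal.{0}),
      Model3 P I ∧ Total I ∧ CondF P I l := by
  constructor
  · intro hT
    obtain ⟨γ, hγ⟩ := stg_closed P
    have hpre : Phi P (stg P γ) ⊆ stg P γ := fun L hL =>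
      hγ (Order.succ γ) (mem_stg.2 ⟨γ, Order.lt_succ γ, hL⟩)
    have hsub : FittingModel P ⊆ stg P γ := Set.sInter_subset_of_mem hpre
    have htot : Total (stg P γ) := fun a => (hT a).imp (fun h => hsub h) (fun h => hsub h)
    have hcons := stg_consistent P γ
    let R : atom → Set Ordinal.{0} := fun a =>
      {α | Lit.pos a ∈ Phi P (stg P α) ∨ Lit.neg a ∈ Phi P (stg P α)}
    have hpos : ∀ {a α}, Lit.pos a ∈ stg P α → Lit.pos a ∈ stg P γ ∧ sInf (R a) < α := by
      intro a α h
      refine ⟨hγ α h, ?_⟩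
      obtain ⟨β, hβ, h⟩ := mem_stg.1 h
      exact (csInf_le' (show β ∈ R a from Or.inl h)).trans_lt hβ
    have hneg : ∀ {a α}, Lit.neg a ∈ stg P α → Lit.neg a ∈ stg P γ ∧ sInf (R a) < α := by
      intro a α h
      refine ⟨hγ α h, ?_⟩
      obtain ⟨β, hβ, h⟩ := mem_stg.1 h
      exact (csInf_le' (show β ∈ R a from Or.inr h)).trans_lt hβ
    have hin : ∀ α, Phi P (stg P α) ⊆ stg P γ := fun α => 
      (Phi_mono' (hγ α)).trans hpre
    refine ⟨stg P γ, fun a => sInf (R a), ⟨hcons, fun C hC => ⟨fun hb => ?_, fun hb hn => ?_⟩⟩,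
      htot, fun A hA => ?_⟩
    · exact hpre (pos_mem_Phi.2 ⟨C, hC, rfl, hb⟩)
    · obtain ⟨β, hβ, h⟩ := mem_stg.1 hn
      exact hb (neg_mem_Phi.1 (Phi_mono' (hγ β) h) C hC rfl)
    · have hne : (R A).Nonempty := by
        rcases hA with h | h
        · obtain ⟨β, hβ, h⟩ := mem_stg.1 h
          exact ⟨β, Or.inl h⟩
        · obtain ⟨β, hβ, h⟩ := mem_stg.1 h
          exact ⟨β, Or.inr h⟩
      rcases csInf_mem hne with h | h
      · refine Or.inl ⟨hin _ h, ?_⟩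
        obtain ⟨C, hC, hh, h1, h2⟩ := pos_mem_Phi.1 h
        exact ⟨C, hC, hh, fun a ha => hpos (h1 a ha), fun b hb => hneg (h2 b hb)⟩
      · refine Or.inr ⟨hin _ h, fun C hC hh => ?_⟩
        rcases neg_mem_Phi.1 h C hC hh with ⟨x, hx, hx'⟩ | ⟨x, hx, hx'⟩
        · exact Or.inl ⟨x, hx, hneg hx'⟩
        · exact Or.inr ⟨x, hx, hpos hx'⟩
  · rintro ⟨I, l, ⟨hcons, -⟩, htot, hF⟩
    have key : ∀ J : Interp atom, Phi P J ⊆ J → ∀ (α : Ordinal.{0}) (A : atom), l A = α →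
        (Lit.pos A ∈ I → Lit.pos A ∈ J) ∧ (Lit.neg A ∈ I → Lit.neg A ∈ J) := by
      intro J hJ α
      induction α using Ordinal.induction with
      | h α ih =>
        rintro A rfl
        rcases hF A (htot A) with ⟨hA, C, hC, hh, h1, h2⟩ | ⟨hA, h⟩
        · refine ⟨fun _ => hJ (pos_mem_Phi.2 ⟨C, hC, hh, fun a ha => ?_, fun b hb => ?_⟩),
            fun hn => (hcons A ⟨hA, hn⟩).elim⟩
          · exact (ih _ (h1 a ha).2 a rfl).1 (h1 a ha).1
          · exact (ih _ (h2 b hb).2 b rfl).2 (h2 b hb).1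
        · refine ⟨fun hp => (hcons A ⟨hp, hA⟩).elim,
            fun _ => hJ (neg_mem_Phi.2 fun C hC hh => ?_)⟩
          rcases h C hC hh with ⟨x, hx, hx', hl⟩ | ⟨x, hx, hx', hl⟩
          · exact Or.inl ⟨x, hx, (ih _ hl x rfl).2 hx'⟩
          · exact Or.inr ⟨x, hx, (ih _ hl x rfl).1 hx'⟩
    intro A
    rcases htot A with h | h
    · exact Or.inl fun J hJ => (key J hJ _ A rfl).1 h
    · exact Or.inr fun J hJ => (key J hJ _ A rfl).2 h

end LP
end

section
/- Let P be a propositional normal logic program with well-founded model M (the least fixed point of W_P). Then M is a model of P, P satisfies (WF) with respect to M and some M-partial level mapping, and for every model I of P and every I-partial level mapping l such that P satisfies (WF) with respect to I and l, one has I ⊆ M. That is, M is the greatest model among all models I for which there exists an I-partial level mapping l for P such that P satisfies (WF) with respect to I and l. -/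
namespace LP

variable {atom : Type}

theorem BodyFalse_mono {I J : Interp atom} (h : I ⊆ J) {C : Clause atom}
    (hC : BodyFalse I C) : BodyFalse J C := by
  rcases hC with ⟨a, ha, h1⟩ | ⟨b, hb, h1⟩
  · exact Or.inl ⟨a, ha, h h1⟩
  · exact Or.inr ⟨b, hb, h h1⟩

theorem pos_mem_WP {P : Program atom} {I : Interp atom} {A : atom} :
    Lit.pos A ∈ WP P I ↔ ∃ C ∈ P, C.head = A ∧ BodyTrue I C := by
  simp [WP, posLits, negLits, TP]

theorem neg_mem_WP {P : Program atom} {I : Interp atom} {A : atom} :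
    Lit.neg A ∈ WP P I ↔ A ∈ UP P I := by
  simp [WP, posLits, negLits]

theorem UP_unfounded (P : Program atom) (I : Interp atom) : Unfounded P I (UP P I) := by
  rintro A ⟨U, hU, hA⟩ C hC hh
  rcases hU A hA C hC hh with h | ⟨a, ha, h⟩
  · exact Or.inl h
  · exact Or.inr ⟨a, ha, U, hU, h⟩

theorem WP_mono (P : Program atom) {I J : Interp atom} (h : I ⊆ J) : WP P I ⊆ WP P J := by
  rintro (A | A) hA
  · obtain ⟨C, hC, hh, h1, h2⟩ := pos_mem_WP.1 hA
    exact pos_mem_WP.2 ⟨C, hC, hh, fun a ha => h (h1 a ha), fun a ha => h (h2 a ha)⟩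
  · have := neg_mem_WP.1 hA
    refine neg_mem_WP.2 ⟨UP P I, ?_, this⟩
    intro B hB C hC hh
    exact (UP_unfounded P I B hB C hC hh).imp_left (BodyFalse_mono h)

theorem WF_prefix (P : Program atom) : WP P (WFModel P) ⊆ WFModel P := by
  intro x hx J hJ
  have hs : WFModel P ⊆ J := Set.sInter_subset_of_mem hJ
  exact hJ (WP_mono P hs hx)

/-- The stages of the iteration of `W_P`. -/
noncomputable def stage (P : Program atom) (α : Ordinal.{0}) : Interp atom :=
  {x | ∃ β : Ordinal.{0}, ∃ _ : β < α, x ∈ WP P (stage P β)}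
termination_by α

theorem mem_stage {P : Program atom} {α : Ordinal.{0}} {x : Lit atom} :
    x ∈ stage P α ↔ ∃ β < α, x ∈ WP P (stage P β) := by
  rw [stage]; simp

theorem stage_mono (P : Program atom) {α β : Ordinal.{0}} (h : α ≤ β) :
    stage P α ⊆ stage P β := by
  intro x hx
  obtain ⟨γ, hγ, hx⟩ := mem_stage.1 hx
  exact mem_stage.2 ⟨γ, hγ.trans_le h, hx⟩

theorem stage_sub (P : Program atom) (α : Ordinal.{0}) : stage P α ⊆ WFModel P := by
  induction α using WellFoundedLT.induction with
  | ind α ih =>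
    intro x hx
    obtain ⟨γ, hγ, hx⟩ := mem_stage.1 hx
    exact WF_prefix P (WP_mono P (ih γ hγ) hx)

/-- The rank of a literal. -/
noncomputable def rk (P : Program atom) (x : Lit atom) : Ordinal.{0} :=
  sInf {β | x ∈ WP P (stage P β)}

theorem rk_le {P : Program atom} {x : Lit atom} {β : Ordinal.{0}}
    (h : x ∈ WP P (stage P β)) : rk P x ≤ β := csInf_le' h

theorem rk_mem {P : Program atom} {x : Lit atom} {β : Ordinal.{0}}
    (h : x ∈ WP P (stage P β)) : x ∈ WP P (stage P (rk P x)) :=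
  csInf_mem (s := {β | x ∈ WP P (stage P β)}) ⟨β, h⟩

theorem rk_lt {P : Program atom} {x : Lit atom} {β : Ordinal.{0}}
    (h : x ∈ stage P β) : rk P x < β := by
  obtain ⟨γ, hγ, hx⟩ := mem_stage.1 h
  exact (rk_le hx).trans_lt hγ

theorem exists_stage (P : Program atom) : ∃ α, WFModel P = stage P α := by
  refine ⟨Order.succ (⨆ x, rk P x), Set.Subset.antisymm ?_ (stage_sub P _)⟩
  refine Set.sInter_subset_of_mem ?_
  intro x hx
  exact mem_stage.2 ⟨rk P x, Order.lt_succ_of_le (Ordinal.le_iSup _ x), rk_mem hx⟩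

theorem stage_cons (P : Program atom) (α : Ordinal.{0}) : Consistent (stage P α) := by
  induction α using WellFoundedLT.induction with
  | ind α ih =>
    rintro A ⟨hp, hn⟩
    obtain ⟨β, hβ, hp⟩ := mem_stage.1 hp
    obtain ⟨γ, hγ, hn⟩ := mem_stage.1 hn
    have hc := ih (max β γ) (max_lt hβ hγ)
    have hn' := neg_mem_WP.1 (WP_mono P (stage_mono P (le_max_right β γ)) hn)
    have key : ∀ δ, δ ≤ max β γ → ∀ A, Lit.pos A ∈ WP P (stage P δ) →
        A ∉ UP P (stage P (max β γ)) := by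
      intro δ
      induction δ using WellFoundedLT.induction with
      | ind δ ihd =>
        intro hδ A hA hU
        obtain ⟨C, hC, hh, h1, h2⟩ := pos_mem_WP.1 hA
        rcases UP_unfounded P _ A hU C hC hh with (⟨a, ha, h⟩ | ⟨b, hb, h⟩) | ⟨a, ha, h⟩
        · exact hc a ⟨stage_mono P hδ (h1 a ha), h⟩
        · exact hc b ⟨h, stage_mono P hδ (h2 b hb)⟩
        · obtain ⟨ε, hε, h3⟩ := mem_stage.1 (h1 a ha)
          exact ihd ε hε (hε.le.trans hδ) a h3 h
    exact key β (le_max_left _ _) A hp hn'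

theorem WF_cons (P : Program atom) : Consistent (WFModel P) := by
  obtain ⟨α, h⟩ := exists_stage P
  rw [h]; exact stage_cons P α

theorem WF_sub (P : Program atom) : WFModel P ⊆ WP P (WFModel P) := by
  obtain ⟨α, h⟩ := exists_stage P
  intro x hx
  rw [h] at hx
  obtain ⟨γ, hγ, hx⟩ := mem_stage.1 hx
  exact WP_mono P (stage_sub P γ) hx

theorem WF_rk {P : Program atom} {x : Lit atom} (hx : x ∈ WFModel P) :
    x ∈ WP P (stage P (rk P x)) := by
  obtain ⟨α, h⟩ := exists_stage P
  rw [h] at hx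
  obtain ⟨γ, hγ, hx⟩ := mem_stage.1 hx
  exact rk_mem hx

open Classical in
/-- The level mapping of the well-founded model. -/
noncomputable def lev (P : Program atom) (A : atom) : Ordinal.{0} :=
  if Lit.pos A ∈ WFModel P then rk P (Lit.pos A) else rk P (Lit.neg A)

theorem lev_pos {P : Program atom} {A : atom} (h : Lit.pos A ∈ WFModel P) :
    lev P A = rk P (Lit.pos A) := if_pos h

theorem lev_neg {P : Program atom} {A : atom} (h : Lit.neg A ∈ WFModel P) :
    lev P A = rk P (Lit.neg A) := if_neg (fun h' => WF_cons P A ⟨h', h⟩)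

theorem lev_lt_pos {P : Program atom} {A : atom} {α : Ordinal.{0}}
    (h : Lit.pos A ∈ stage P α) : Lit.pos A ∈ WFModel P ∧ lev P A < α := by
  have := stage_sub P α h
  exact ⟨this, by rw [lev_pos this]; exact rk_lt h⟩

theorem lev_lt_neg {P : Program atom} {A : atom} {α : Ordinal.{0}}
    (h : Lit.neg A ∈ stage P α) : Lit.neg A ∈ WFModel P ∧ lev P A < α := by
  have := stage_sub P α h
  exact ⟨this, by rw [lev_neg this]; exact rk_lt h⟩

theorem WF_condWF (P : Program atom) : CondWF P (WFModel P) (lev P) := by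
  rintro A (hA | hA)
  · refine Or.inl ⟨hA, ?_⟩
    obtain ⟨C, hC, hh, h1, h2⟩ := pos_mem_WP.1 (WF_rk hA)
    rw [lev_pos hA]
    exact ⟨C, hC, hh, fun a ha => lev_lt_pos (h1 a ha), fun b hb => lev_lt_neg (h2 b hb)⟩
  · refine Or.inr ⟨hA, ?_⟩
    rw [lev_neg hA]
    intro C hC hh
    rcases UP_unfounded P _ A (neg_mem_WP.1 (WF_rk hA)) C hC hh with
      (⟨a, ha, h⟩ | ⟨b, hb, h⟩) | ⟨a, ha, h⟩
    · exact Or.inl ⟨a, ha, (lev_lt_neg h).1, (lev_lt_neg h).2.le⟩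
    · exact Or.inr ⟨b, hb, lev_lt_pos h⟩
    · have h3 := neg_mem_WP.2 h
      have h4 : Lit.neg a ∈ WFModel P := WF_prefix P (WP_mono P (stage_sub P _) h3)
      exact Or.inl ⟨a, ha, h4, by rw [lev_neg h4]; exact rk_le h3⟩

theorem WF_model (P : Program atom) : Model3 P (WFModel P) := by
  refine ⟨WF_cons P, fun C hC => ⟨fun h => WF_prefix P (pos_mem_WP.2 ⟨C, hC, rfl, h⟩), ?_⟩⟩
  intro hb hn
  rcases UP_unfounded P _ _ (neg_mem_WP.1 (WF_sub P hn)) C hC rfl with h | ⟨a, ha, h⟩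
  · exact hb h
  · exact hb (Or.inl ⟨a, ha, WF_prefix P (neg_mem_WP.2 h)⟩)

theorem WF_greatest (P : Program atom) (I : Interp atom) (l : atom → Ordinal.{0})
    (hI : Consistent I) (hl : CondWF P I l) (α : Ordinal.{0}) :
    ∀ A, l A = α → (Lit.pos A ∈ I → Lit.pos A ∈ WFModel P) ∧
      (Lit.neg A ∈ I → Lit.neg A ∈ WFModel P) := by
  induction α using WellFoundedLT.induction with
  | ind α ih =>
    intro A hA
    constructor
    · intro hp
      rcases hl A (Or.inl hp) with ⟨-, C, hC, hh, h1, h2⟩ | ⟨hn, -⟩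
      · refine WF_prefix P (pos_mem_WP.2 ⟨C, hC, hh, fun a ha => ?_, fun b hb => ?_⟩)
        · exact (ih _ (hA ▸ (h1 a ha).2) a rfl).1 (h1 a ha).1
        · exact (ih _ (hA ▸ (h2 b hb).2) b rfl).2 (h2 b hb).1
      · exact (hI A ⟨hp, hn⟩).elim
    · intro hn
      refine WF_prefix P (neg_mem_WP.2 ⟨{B | Lit.neg B ∈ I ∧ l B = α}, ?_, hn, hA⟩)
      rintro B ⟨hB, hBα⟩ C hC hh
      rcases hl B (Or.inr hB) with ⟨hp, -⟩ | ⟨-, h⟩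
      · exact (hI B ⟨hp, hB⟩).elim
      · rcases h C hC hh with ⟨a, ha, h1, h2⟩ | ⟨b, hb, h1, h2⟩
        · rw [hBα] at h2
          rcases h2.lt_or_eq with h3 | h3
          · exact Or.inl (Or.inl ⟨a, ha, (ih _ h3 a rfl).2 h1⟩)
          · exact Or.inr ⟨a, ha, h1, h3⟩
        · rw [hBα] at h2
          exact Or.inl (Or.inr ⟨b, hb, (ih _ h2 b rfl).1 h1⟩)

/-- the well-founded model is the greatest model `I` admitting an
`I`-partial level mapping `l` such that `P` satisfies (WF) w.r.t. `I` and `l`. -/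
theorem wellfounded_model_char {atom : Type} [Countable atom] (P : Program atom) :
    Model3 P (WFModel P) ∧
    (∃ l : atom → Ordinal.{0}, CondWF P (WFModel P) l) ∧
    ∀ (I : Interp atom) (l : atom → Ordinal.{0}),
      Model3 P I → CondWF P I l → I ⊆ WFModel P := by
  refine ⟨WF_model P, ⟨lev P, WF_condWF P⟩, ?_⟩
  rintro I l hM hl (A | A) hA
  · exact (WF_greatest P I l hM.1 hl _ A rfl).1 hA
  · exact (WF_greatest P I l hM.1 hl _ A rfl).2 hA

end LP
end
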